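/- The set ℳ of Γ-conjugacy classes of maximal finite subgroups of Γ is finite, and for a maximal finite subgroup M the subgroup π(M) ⊆ G depends only on the conjugacy class of M (since G is abelian). Let ρ : G → GL(L ⊗_ℤ ℚ) be the induced rational representation. Then for every g ∈ G with g ≠ 1: det( id − ρ(g) : L ⊗_ℤ ℚ → L ⊗_ℤ ℚ ) = Σ_{(M) ∈ ℳ, g ∈ π(M)} [G : π(M)]. -/

import Mathlib

open scoped TensorProduct Classical

/-- The subgroup `K` of `Γ` is conjugate to the subgroup `H`. -/
def SubConj (Γ : Type*) [Group Γ] (H K : Subgroup Γ) : Prop :=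
  ∃ γ : Γ, K = Subgroup.map (MulAut.conj γ).toMonoidHom H

/-- A subgroup `M` of `Γ` is a maximal finite subgroup. -/
def IsMaxFin (Γ : Type*) [Group Γ] (M : Subgroup Γ) : Prop :=
  (M : Set Γ).Finite ∧ ∀ K : Subgroup Γ, (K : Set Γ).Finite → M ≤ K → M = K

/-- The set `ℳ` of `Γ`-conjugacy classes of (non-trivial) maximal finite subgroups of `Γ`. -/
def MaxFinClasses (Γ : Type*) [Group Γ] : Type _ :=
  Quot fun H K : {H : Subgroup Γ // IsMaxFin Γ H ∧ H ≠ ⊥} => SubConj Γ H.1 K.1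

/-!
Summing the elements `γ * s h * (s (γ h))⁻¹` of `L` over `h : Γ ⧸ L`, for a section `s` of
`Γ → Γ ⧸ L`, yields an affine action of `Γ` on the lattice that, after scaling its translation part
by `|Γ ⧸ L|`, has a fixed point for each finite subgroup. A lift `γ` of an element `g ≠ 1` has
exactly one fixed point, whose stabilizer is the unique maximal finite subgroup containing `γ`.

The `L`-conjugacy classes of lifts of `g` can then be counted in two ways. Once a lift is chosen,
they are the classes of `V ⧸ (1 - ρ g) V`, whose order is `|det (1 - ρ g)|`; the determinant is
nonnegative because `ρ g` has finite order, so that `det (1 - t • ρ g)` has no zero for `0 ≤ t < 1`.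
On the other hand, the classes of lifts contained in a conjugate of a given maximal finite subgroup
`M` correspond to the fixed points of `g` on `(Γ ⧸ L) ⧸ π(M)`, since nontrivial maximal finite
subgroups are self-normalizing. For commutative `Γ ⧸ L` there are `[Γ ⧸ L : π(M)]` such fixed points
if `g ∈ π(M)`, and none otherwise.
-/

section Determinant

theorem det_one_sub_nonneg_of_isOfFinOrder {ι : Type*} [Fintype ι] {C : Matrix ι ι ℝ}
    (hC : IsOfFinOrder C) : 0 ≤ (1 - C).det := by
  obtain ⟨d, hd, hCd⟩ := isOfFinOrder_iff_pow_eq_one.1 hC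
  by_contra! hneg
  have hcont : Continuous fun t : ℝ => (1 - t • C).det := by fun_prop
  obtain ⟨t, ⟨ht0, ht1⟩, hzero : (1 - t • C).det = 0⟩ :=
    intermediate_value_Icc' zero_le_one hcont.continuousOn
      (show (0 : ℝ) ∈ _ by simpa using hneg.le)
  have ht : t ≠ 1 := by
    rintro rfl
    rw [one_smul] at hzero
    exact hneg.ne hzero
  have hfactor : (1 - t • C) * ∑ i ∈ Finset.range d, (t • C) ^ i = (1 - t ^ d) • 1 := by
    rw [mul_neg_geom_sum, smul_pow, hCd, sub_smul, one_smul]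
  have hdet : (1 - t ^ d) ^ Fintype.card ι = 0 := by
    simpa [Matrix.det_mul, hzero, eq_comm] using congrArg Matrix.det hfactor
  exact pow_ne_zero _ (sub_ne_zero.2 (pow_lt_one₀ ht0 (ht1.lt_of_ne ht) hd.ne').ne') hdet

variable {V : Type*} [AddCommGroup V] [Module.Free ℤ V] [Module.Finite ℤ V]

theorem det_id_sub_nonneg_of_isOfFinOrder {f : V →ₗ[ℤ] V} (hf : IsOfFinOrder f) :
    0 ≤ LinearMap.det (LinearMap.id - f) := by
  let b := Module.Free.chooseBasis ℤ V
  let toReal : (V →ₗ[ℤ] V) →+* Matrix _ _ ℝ :=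
    (Int.castRingHom ℝ).mapMatrix.comp (LinearMap.toMatrixAlgEquiv b).toRingEquiv.toRingHom
  have hdet : ((LinearMap.det (LinearMap.id - f) : ℤ) : ℝ) = (1 - toReal f).det := by
    rw [← map_one toReal, ← map_sub, ← LinearMap.det_toMatrix b]
    exact (Int.castRingHom ℝ).map_det _
  rw [← Int.cast_nonneg_iff (R := ℝ), hdet]
  exact det_one_sub_nonneg_of_isOfFinOrder (toReal.toMonoidHom.isOfFinOrder hf)

theorem card_quotient_range_eq_natAbs_det {f : V →ₗ[ℤ] V} (hf : Function.Injective f) :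
    Nat.card (V ⧸ LinearMap.range f) = (LinearMap.det f).natAbs := by
  rw [← Submodule.natAbs_det_equiv _ (LinearEquiv.ofInjective f hf)]
  rfl

theorem finite_quotient_range {f : V →ₗ[ℤ] V} (hf : Function.Injective f) :
    Finite (V ⧸ LinearMap.range f) :=
  Submodule.finiteQuotientOfFreeOfRankEq _ (LinearMap.finrank_range_of_inj hf)

theorem det_id_sub_baseChange_eq_card {f : V →ₗ[ℤ] V} (hf : IsOfFinOrder f)
    (hinj : Function.Injective (LinearMap.id - f : V →ₗ[ℤ] V)) :
    LinearMap.det (LinearMap.id - f.baseChange ℚ) =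
      (Nat.card (V ⧸ LinearMap.range (LinearMap.id - f)) : ℚ) := by
  rw [← LinearMap.baseChange_id, ← LinearMap.baseChange_sub, LinearMap.det_baseChange,
    card_quotient_range_eq_natAbs_det hinj, Nat.cast_natAbs,
    abs_of_nonneg (det_id_sub_nonneg_of_isOfFinOrder hf), eq_intCast]

end Determinant

section Conjugation

open scoped Pointwise

variable {Γ : Type*} [Group Γ] {H K M : Subgroup Γ}

theorem subConj_iff : SubConj Γ H K ↔ ∃ γ : Γ, K = MulAut.conj γ • H :=
  Iff.rfl

theorem SubConj.eq [IsMulCommutative Γ] (h : SubConj Γ H K) : H = K := by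
  obtain ⟨γ, rfl⟩ := h
  ext x
  simp [mul_comm' γ]

theorem SubConj.map {Γ' : Type*} [Group Γ'] (f : Γ →* Γ') (h : SubConj Γ H K) :
    SubConj Γ' (H.map f) (K.map f) := by
  obtain ⟨γ, rfl⟩ := h
  refine ⟨f γ, ?_⟩
  rw [Subgroup.map_map, Subgroup.map_map]
  congr 1
  ext x
  simp

theorem mk_eq_mk_iff_subConj {M N : {H : Subgroup Γ // IsMaxFin Γ H ∧ H ≠ ⊥}} :
    (Quot.mk _ M : MaxFinClasses Γ) = Quot.mk _ N ↔ SubConj Γ M.1 N.1 := by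
  have hequiv : Equivalence fun H K : {H : Subgroup Γ // IsMaxFin Γ H ∧ H ≠ ⊥} =>
      SubConj Γ H.1 K.1 := by
    simp only [subConj_iff]
    refine ⟨fun H => ⟨1, by simp⟩, ?_, ?_⟩
    · rintro H K ⟨γ, h⟩
      exact ⟨γ⁻¹, by simp [h]⟩
    · rintro H K N ⟨γ, h⟩ ⟨δ, h'⟩
      exact ⟨δ * γ, by rw [h', h, map_mul, mul_smul]⟩
  exact Equivalence.quot_mk_eq_iff hequiv M N

theorem IsMaxFin.conj_smul (hM : IsMaxFin Γ M) (γ : Γ) : IsMaxFin Γ (MulAut.conj γ • M) := by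
  have finite_smul {K : Subgroup Γ} (δ : Γ) (hK : (K : Set Γ).Finite) :
      ((MulAut.conj δ • K : Subgroup Γ) : Set Γ).Finite := by
    rw [Subgroup.coe_pointwise_smul]
    exact hK.smul_set
  refine ⟨finite_smul γ hM.1, fun K hK hle => ?_⟩
  rw [hM.2 (MulAut.conj γ⁻¹ • K) (finite_smul _ hK)
    (by rwa [map_inv, ← Subgroup.pointwise_smul_subset_iff]), map_inv, smul_inv_smul]

theorem mem_normalizer_of_conj_smul_eq {γ : Γ} (h : MulAut.conj γ • M = M) :
    γ ∈ Subgroup.normalizer (M : Set Γ) := by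
  rw [Subgroup.mem_normalizer_iff]
  intro x
  conv_rhs => rw [← h]
  exact (Subgroup.smul_mem_pointwise_smul_iff (a := MulAut.conj γ)).symm

theorem mk_mem_fixedBy_iff {x g : Γ} :
    (x : Γ ⧸ H) ∈ MulAction.fixedBy (Γ ⧸ H) g ↔ x⁻¹ * g * x ∈ H := by
  rw [MulAction.mem_fixedBy, MulAction.Quotient.smul_mk, eq_comm, QuotientGroup.eq, smul_eq_mul,
    mul_assoc]

theorem card_fixedBy_quotient [IsMulCommutative Γ] (H : Subgroup Γ) (g : Γ) :
    Nat.card (MulAction.fixedBy (Γ ⧸ H) g) = if g ∈ H then H.index else 0 := by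
  have hfixed (x : Γ ⧸ H) : x ∈ MulAction.fixedBy (Γ ⧸ H) g ↔ g ∈ H := by
    obtain ⟨y, rfl⟩ := QuotientGroup.mk_surjective x
    rw [mk_mem_fixedBy_iff, mul_assoc, mul_comm' g y, inv_mul_cancel_left]
  split_ifs with hg
  · rw [Subgroup.index, Set.eq_univ_of_forall fun x => (hfixed x).2 hg]
    exact Nat.card_congr (Equiv.Set.univ _)
  · rw [Set.eq_empty_of_forall_notMem fun x hx => hg ((hfixed x).1 hx)]
    simp

end Conjugation

section NormalSubgroup

variable {Γ : Type*} [Group Γ] {L : Subgroup Γ}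

theorem disjoint_of_finite [IsMulTorsionFree L] (K : Subgroup Γ) [Finite K] : Disjoint K L := by
  rw [Subgroup.disjoint_def]
  intro x hxK hxL
  have hx : IsOfFinOrder (⟨x, hxL⟩ : L) := by
    rw [← Submonoid.isOfFinOrder_coe]
    exact K.subtype.isOfFinOrder (isOfFinOrder_of_finite (⟨x, hxK⟩ : K))
  exact congrArg Subtype.val hx.eq_one'

variable [L.Normal]

theorem injective_mk'_subtype_of_disjoint {K : Subgroup Γ} (h : Disjoint K L) :
    Function.Injective ((QuotientGroup.mk' L).comp K.subtype) := by
  rw [injective_iff_map_eq_one]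
  intro k hk
  exact Subtype.ext (Subgroup.disjoint_def.1 h k.2 ((QuotientGroup.eq_one_iff _).1 hk))

theorem finite_of_disjoint [Finite (Γ ⧸ L)] {K : Subgroup Γ} (h : Disjoint K L) : Finite K :=
  Finite.of_injective _ (injective_mk'_subtype_of_disjoint h)

theorem notMem_of_mk_eq {g : Γ ⧸ L} (hg : g ≠ 1) {γ : Γ} (hγ : (γ : Γ ⧸ L) = g) : γ ∉ L :=
  fun h => hg (hγ.symm.trans ((QuotientGroup.eq_one_iff γ).2 h))

theorem normalizer_le_of_isMaxFin [Finite (Γ ⧸ L)] [IsMulTorsionFree L]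
    (hcomm : ∀ γ ∉ L, ∀ l ∈ L, Commute l γ → l = 1)
    {M : Subgroup Γ} (hM : IsMaxFin Γ M) (hbot : M ≠ ⊥) :
    Subgroup.normalizer (M : Set Γ) ≤ M := by
  have : Finite M := hM.1
  have hML {x : Γ} : x ∈ M → x ∈ L → x = 1 := Subgroup.disjoint_def.1 (disjoint_of_finite M)
  obtain ⟨k, hk, hk1⟩ := M.bot_or_exists_ne_one.resolve_left hbot
  have hdisj : Disjoint (Subgroup.normalizer (M : Set Γ)) L := by
    rw [Subgroup.disjoint_def]
    intro l hlN hlL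
    refine hcomm k (fun hkL => hk1 (hML hk hkL)) l hlL ?_
    have hcommM : l * k * l⁻¹ * k⁻¹ ∈ M :=
      mul_mem ((Subgroup.mem_normalizer_iff.1 hlN k).1 hk) (inv_mem hk)
    have hcommL : l * k * l⁻¹ * k⁻¹ ∈ L := by
      simpa only [mul_assoc] using
        mul_mem hlL (Subgroup.Normal.conj_mem ‹_› _ (inv_mem hlL) k)
    exact commutatorElement_eq_one_iff_commute.1 (hML hcommM hcommL)
  have hfin : Finite (Subgroup.normalizer (M : Set Γ)) := finite_of_disjoint hdisj
  exact (hM.2 _ hfin Subgroup.le_normalizer).ge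

end NormalSubgroup

section CrossedHom

variable {R Γ V : Type*} [CommRing R] [Group Γ] [AddCommGroup V] [Module R V]

/-- `φ` is a crossed homomorphism (inhomogeneous 1-cocycle) for the representation `σ`;
equivalently, `γ • v = σ γ v + φ γ` is an affine action of `Γ` on `V` with linear part `σ`. -/
def IsCrossedHom (σ : Representation R Γ V) (φ : Γ → V) : Prop :=
  ∀ γ δ, φ (γ * δ) = φ γ + σ γ (φ δ)

namespace IsCrossedHom

variable {σ : Representation R Γ V} {φ : Γ → V}

theorem map_one (hφ : IsCrossedHom σ φ) : φ 1 = 0 := by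
  simpa using hφ 1 1

theorem nsmul (hφ : IsCrossedHom σ φ) (n : ℕ) : IsCrossedHom σ (n • φ) := fun γ δ => by
  simp [hφ γ δ]

/-- The stabilizer of `v` under the affine action `γ • v = σ γ v + φ γ`. -/
def stabilizer (hφ : IsCrossedHom σ φ) (v : V) : Subgroup Γ where
  carrier := {γ | σ γ v + φ γ = v}
  one_mem' := by simp [hφ.map_one]
  mul_mem' {γ δ} (hγ : σ γ v + φ γ = v) (hδ : σ δ v + φ δ = v) := by
    calc σ (γ * δ) v + φ (γ * δ) = σ γ (σ δ v + φ δ) + φ γ := by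
          rw [hφ, map_mul, Module.End.mul_apply, map_add]; abel
      _ = v := by rw [hδ, hγ]
  inv_mem' {γ} (hγ : σ γ v + φ γ = v) := by
    have hinv : φ γ⁻¹ = -σ γ⁻¹ (φ γ) := by
      rw [eq_neg_iff_add_eq_zero, ← hφ, inv_mul_cancel, hφ.map_one]
    calc σ γ⁻¹ v + φ γ⁻¹ = σ γ⁻¹ (v - φ γ) := by rw [hinv, map_sub, sub_eq_add_neg]
      _ = σ γ⁻¹ (σ γ v) := by rw [← eq_sub_of_add_eq hγ]
      _ = v := σ.inv_self_apply γ v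

theorem mem_stabilizer (hφ : IsCrossedHom σ φ) {v : V} {γ : Γ} :
    γ ∈ hφ.stabilizer v ↔ σ γ v + φ γ = v :=
  Iff.rfl

theorem exists_le_stabilizer (hφ : IsCrossedHom σ φ) (K : Subgroup Γ) [Finite K] {n : ℕ}
    (hn : Nat.card K ∣ n) : ∃ v, K ≤ (hφ.nsmul n).stabilizer v := by
  have := Fintype.ofFinite K
  obtain ⟨m, rfl⟩ := hn
  refine ⟨m • ∑ k : K, φ k, fun k hk => ?_⟩
  have htranslate : ∑ h : K, φ h = Nat.card K • φ k + σ k (∑ h : K, φ h) := by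
    calc ∑ h : K, φ h = ∑ h : K, φ (k * h) :=
          (Equiv.sum_comp (Equiv.mulLeft (⟨k, hk⟩ : K)) fun h => φ h).symm
      _ = _ := by simp [hφ k, Finset.sum_add_distrib]
  rw [mem_stabilizer, map_nsmul, Pi.smul_apply, mul_comm, mul_smul, ← smul_add, add_comm,
    ← htranslate]

end IsCrossedHom

end CrossedHom

section Lattice

variable {Γ V : Type*} [Group Γ] [AddCommGroup V] {L : Subgroup Γ}

/-- The inclusion of `L` into `Γ`, seen as a map out of `V`. -/
def latticeHom (e : L ≃* Multiplicative V) : Multiplicative V →* Γ :=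
  L.subtype.comp e.symm.toMonoidHom

variable {e : L ≃* Multiplicative V}

theorem latticeHom_injective : Function.Injective (latticeHom e) :=
  L.subtype_injective.comp e.symm.injective

theorem latticeHom_mem (x : Multiplicative V) : latticeHom e x ∈ L :=
  (e.symm x).2

theorem exists_latticeHom_eq {l : Γ} (hl : l ∈ L) :
    ∃ x : V, latticeHom e (Multiplicative.ofAdd x) = l :=
  ⟨Multiplicative.toAdd (e ⟨l, hl⟩), by simp [latticeHom]⟩

theorem isMulTorsionFree_of_mulEquiv [IsAddTorsionFree V] (e : L ≃* Multiplicative V) :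
    IsMulTorsionFree L :=
  e.injective.isMulTorsionFree e.toMonoidHom

end Lattice

section LiftClasses

variable {Γ : Type*} [Group Γ] {L : Subgroup Γ} [L.Normal]

/-- Conjugacy under `L` on the set of lifts to `Γ` of an element `g` of `Γ ⧸ L`. -/
def liftSetoid (L : Subgroup Γ) [L.Normal] (g : Γ ⧸ L) : Setoid {γ : Γ // (γ : Γ ⧸ L) = g} where
  r γ δ := ∃ l ∈ L, l * γ * l⁻¹ = δ
  iseqv.refl γ := ⟨1, L.one_mem, by simp⟩
  iseqv.symm := by
    rintro γ δ ⟨l, hl, h⟩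
    exact ⟨l⁻¹, L.inv_mem hl, by rw [← h]; group⟩
  iseqv.trans := by
    rintro γ δ ε ⟨l, hl, h⟩ ⟨k, hk, h'⟩
    exact ⟨k * l, L.mul_mem hk hl, by rw [← h', ← h]; group⟩

/-- The set of `L`-conjugacy classes of lifts of `g`. Its cardinality is computed once from the
lattice `L` and once from the maximal finite subgroups of `Γ`. -/
abbrev LiftClasses (L : Subgroup Γ) [L.Normal] (g : Γ ⧸ L) : Type _ :=
  Quotient (liftSetoid L g)

theorem liftClasses_mk_eq_mk {g : Γ ⧸ L} {γ δ : {γ : Γ // (γ : Γ ⧸ L) = g}} :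
    (Quotient.mk _ γ : LiftClasses L g) = Quotient.mk _ δ ↔
      ∃ l ∈ L, l * (γ : Γ) * l⁻¹ = δ :=
  Quotient.eq

/-- Two surjections with the same kernel have equivalent targets. -/
noncomputable def equivOfKerEq {X Y Z : Type*} {f : X → Y} {h : X → Z}
    (hf : Function.Surjective f) (hh : Function.Surjective h)
    (hker : ∀ x x', f x = f x' ↔ h x = h x') : Y ≃ Z :=
  (Setoid.quotientKerEquivOfSurjective f hf).symm.trans <|
    (Quotient.congrRight hker).trans (Setoid.quotientKerEquivOfSurjective h hh)

section ConjLifts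

/-- The pairs `(δ, k)` with `k ∈ M` such that `δ * k * δ⁻¹` is a lift of `g`. They surject both
onto the classes of lifts of `g` belonging to `M` and onto the fixed points of `g` on the cosets of
the image of `M`. -/
abbrev ConjLifts (M : Subgroup Γ) (g : Γ ⧸ L) : Type _ :=
  {p : Γ × M // ((p.1 * p.2 * p.1⁻¹ : Γ) : Γ ⧸ L) = g}

namespace ConjLifts

variable {M : Subgroup Γ} {g : Γ ⧸ L}

/-- The class of the lift `δ * k * δ⁻¹`. -/
def toLiftClass (p : ConjLifts M g) : LiftClasses L g :=
  Quotient.mk _ ⟨p.1.1 * p.1.2 * p.1.1⁻¹, p.2⟩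

/-- The coset of `δ`. -/
def toFixedPoint (p : ConjLifts M g) :
    MulAction.fixedBy ((Γ ⧸ L) ⧸ M.map (QuotientGroup.mk' L)) g :=
  ⟨((p.1.1 : Γ ⧸ L) : _ ⧸ _), mk_mem_fixedBy_iff.2 ⟨p.1.2, p.1.2.2, by
    simp [← p.2, mul_assoc]⟩⟩

theorem toFixedPoint_surjective :
    Function.Surjective (toFixedPoint (M := M) (g := g)) := by
  rintro ⟨x, hx⟩
  obtain ⟨y, rfl⟩ := QuotientGroup.mk_surjective x
  obtain ⟨δ, rfl⟩ := QuotientGroup.mk_surjective y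
  obtain ⟨k, hk, hkg : (k : Γ ⧸ L) = _⟩ := mk_mem_fixedBy_iff.1 hx
  exact ⟨⟨(δ, ⟨k, hk⟩), by simp [hkg, mul_assoc]⟩, rfl⟩

end ConjLifts

end ConjLifts

section ConjugationRepresentation

variable {V : Type*} [AddCommGroup V]

/-- The representation `ρ` of `Γ ⧸ L` on `V` is the conjugation action on the abelian normal
subgroup `L`, transported to `V` along the identification `e`. -/
def IsConjRep (e : L ≃* Multiplicative V) (ρ : Representation ℤ (Γ ⧸ L) V) : Prop :=
  ∀ (γ : Γ) (x : L), e ⟨γ * (x : Γ) * γ⁻¹, Subgroup.Normal.conj_mem ‹_› (x : Γ) x.2 γ⟩ =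
    Multiplicative.ofAdd (ρ (γ : Γ ⧸ L) (Multiplicative.toAdd (e x)))

variable {e : L ≃* Multiplicative V} {ρ : Representation ℤ (Γ ⧸ L) V}

namespace IsConjRep

theorem conj_latticeHom (hρ : IsConjRep e ρ) (γ : Γ) (x : V) :
    γ * latticeHom e (Multiplicative.ofAdd x) * γ⁻¹ =
      latticeHom e (Multiplicative.ofAdd (ρ (γ : Γ ⧸ L) x)) := by
  have h := hρ γ (e.symm (Multiplicative.ofAdd x))
  rw [MulEquiv.apply_symm_apply, toAdd_ofAdd, ← MulEquiv.eq_symm_apply] at h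
  exact congrArg Subtype.val h

theorem eq_one_of_commute (hρ : IsConjRep e ρ)
    (hfree : ∀ g : Γ ⧸ L, g ≠ 1 → ∀ x : V, x ≠ 0 → ρ g x ≠ x)
    {γ : Γ} (hγ : γ ∉ L) {l : Γ} (hl : l ∈ L) (h : Commute l γ) : l = 1 := by
  obtain ⟨x, rfl⟩ := exists_latticeHom_eq (e := e) hl
  have hfix : ρ (γ : Γ ⧸ L) x = x := by
    refine Multiplicative.ofAdd.injective (latticeHom_injective (e := e) ?_)
    rw [← hρ.conj_latticeHom, h.symm.eq, mul_inv_cancel_right]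
  by_contra hx
  refine hfree γ (fun h1 => hγ ((QuotientGroup.eq_one_iff γ).1 h1)) x ?_ hfix
  rintro rfl
  exact hx (map_one _)

theorem exists_isCrossedHom [Finite (Γ ⧸ L)] (hρ : IsConjRep e ρ) :
    ∃ φ : Γ → V, IsCrossedHom (ρ.comp (QuotientGroup.mk' L)) φ ∧
      ∀ x : V, φ (latticeHom e (Multiplicative.ofAdd x)) = Nat.card (Γ ⧸ L) • x := by
  have := Fintype.ofFinite (Γ ⧸ L)
  have hmem (γ : Γ) (h : Γ ⧸ L) : γ * h.out * ((γ : Γ ⧸ L) * h).out⁻¹ ∈ L := by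
    simp [← QuotientGroup.eq_one_iff]
  let c (γ : Γ) (h : Γ ⧸ L) : V := Multiplicative.toAdd (e ⟨_, hmem γ h⟩)
  have hc_mul (γ δ : Γ) (h : Γ ⧸ L) : c (γ * δ) h = c γ (δ * h) + ρ γ (c δ h) := by
    apply Multiplicative.ofAdd.injective
    rw [add_comm, ofAdd_add, ← hρ]
    change e _ = e _ * e _
    rw [← map_mul]
    congr 1
    ext
    simp [mul_assoc]
  have hc_lattice (x : V) (h : Γ ⧸ L) : c (latticeHom e (Multiplicative.ofAdd x)) h = x := by
    have h1 : ((latticeHom e (Multiplicative.ofAdd x) : Γ) : Γ ⧸ L) = 1 :=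
      (QuotientGroup.eq_one_iff _).2 (latticeHom_mem _)
    apply Multiplicative.ofAdd.injective
    rw [ofAdd_toAdd, ← MulEquiv.eq_symm_apply]
    ext
    simp only [h1, one_mul, mul_inv_cancel_right]
    rfl
  refine ⟨fun γ => ∑ h, c γ h, fun γ δ => ?_, fun x => ?_⟩
  · calc ∑ h, c (γ * δ) h = ∑ h, c γ (δ * h) + ρ γ (∑ h, c δ h) := by
          simp only [hc_mul, Finset.sum_add_distrib, map_sum]
      _ = _ := congrArg (· + _) (Equiv.sum_comp (Equiv.mulLeft (δ : Γ ⧸ L)) (c γ))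
  · simp [hc_lattice]

theorem conj_latticeHom_mul (hρ : IsConjRep e ρ) (γ : Γ) (x y : V) :
    latticeHom e (Multiplicative.ofAdd y) * (latticeHom e (Multiplicative.ofAdd x) * γ) *
        (latticeHom e (Multiplicative.ofAdd y))⁻¹ =
      latticeHom e (Multiplicative.ofAdd (x + (y - ρ (γ : Γ ⧸ L) y))) * γ := by
  have hsum : x + (y - ρ (γ : Γ ⧸ L) y) = y + x + -ρ (γ : Γ ⧸ L) y := by abel
  rw [hsum, ofAdd_add, ofAdd_add, ofAdd_neg, map_mul, map_mul, map_inv, ← hρ.conj_latticeHom]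
  group

theorem nonempty_quotient_range_equiv_liftClasses (hρ : IsConjRep e ρ) (g : Γ ⧸ L) :
    Nonempty ((V ⧸ LinearMap.range (LinearMap.id - ρ g)) ≃ LiftClasses L g) := by
  obtain ⟨γ, rfl⟩ := QuotientGroup.mk_surjective g
  let lift (x : V) : {δ : Γ // (δ : Γ ⧸ L) = γ} :=
    ⟨latticeHom e (Multiplicative.ofAdd x) * γ, by
      rw [QuotientGroup.mk_mul, (QuotientGroup.eq_one_iff _).2 (latticeHom_mem _), one_mul]⟩
  have hlift : Function.Surjective lift := by
    rintro ⟨δ, hδ⟩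
    obtain ⟨x, hx⟩ := exists_latticeHom_eq (e := e) (QuotientGroup.eq_iff_div_mem.1 hδ)
    exact ⟨x, Subtype.ext ((congrArg (· * γ) hx).trans (div_mul_cancel δ γ))⟩
  refine ⟨equivOfKerEq (Submodule.Quotient.mk_surjective _)
    (Quotient.mk_surjective.comp hlift) fun x x' => ?_⟩
  rw [eq_comm, Submodule.Quotient.eq, Function.comp_apply, Function.comp_apply,
    liftClasses_mk_eq_mk]
  constructor
  · rintro ⟨y, hy : y - ρ γ y = x' - x⟩
    refine ⟨_, latticeHom_mem (e := e) (Multiplicative.ofAdd y), ?_⟩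
    rw [hρ.conj_latticeHom_mul, hy, add_sub_cancel]
  · rintro ⟨l, hl, h⟩
    obtain ⟨y, rfl⟩ := exists_latticeHom_eq (e := e) hl
    rw [hρ.conj_latticeHom_mul] at h
    have hx' : x + (y - ρ γ y) = x' :=
      Multiplicative.ofAdd.injective (latticeHom_injective (mul_right_cancel h))
    exact ⟨y, eq_sub_of_add_eq' hx'⟩

end IsConjRep

end ConjugationRepresentation

end LiftClasses

section MaximalFinite

open scoped Pointwise

variable {Γ : Type*} [Group Γ] {L : Subgroup Γ}

/-- Conditions (M) and (NM) of Lück–Weiermann, relative to a torsion-free normal subgroup `L`: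
every element outside `L` lies in a unique maximal finite subgroup, and nontrivial maximal
finite subgroups are self-normalizing. -/
structure MaxFinIsolated (L : Subgroup Γ) : Prop where
  existsUnique : ∀ γ ∉ L, ∃! M : Subgroup Γ, IsMaxFin Γ M ∧ γ ∈ M
  normalizer_le : ∀ M : Subgroup Γ, IsMaxFin Γ M → M ≠ ⊥ → Subgroup.normalizer (M : Set Γ) ≤ M

section AffineAction

variable {V : Type*} [AddCommGroup V]

theorem injective_id_sub {f : V →ₗ[ℤ] V} (h : ∀ x : V, x ≠ 0 → f x ≠ x) :
    Function.Injective (LinearMap.id - f : V →ₗ[ℤ] V) := by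
  rw [injective_iff_map_eq_zero]
  intro x hx
  by_contra hx0
  exact h x hx0 (sub_eq_zero.1 hx).symm

variable [L.Normal] [Finite (Γ ⧸ L)] {e : L ≃* Multiplicative V}
  {ρ : Representation ℤ (Γ ⧸ L) V}

namespace IsConjRep

theorem isOfFinOrder_of_notMem (hρ : IsConjRep e ρ)
    (hfree : ∀ g : Γ ⧸ L, g ≠ 1 → ∀ x : V, x ≠ 0 → ρ g x ≠ x) {γ : Γ} (hγ : γ ∉ L) :
    IsOfFinOrder γ := by
  refine isOfFinOrder_iff_pow_eq_one.2 ⟨Nat.card (Γ ⧸ L), Nat.card_pos, ?_⟩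
  refine hρ.eq_one_of_commute hfree hγ ?_ (Commute.pow_self γ _)
  rw [← QuotientGroup.eq_one_iff, QuotientGroup.mk_pow, pow_card_eq_one']

variable [IsAddTorsionFree V]

theorem exists_isCrossedHom_stabilizer (hρ : IsConjRep e ρ) :
    ∃ (φ : Γ → V) (hφ : IsCrossedHom (ρ.comp (QuotientGroup.mk' L)) φ),
      (∀ v, Finite (hφ.stabilizer v)) ∧
        ∀ K : Subgroup Γ, Finite K → ∃ v, K ≤ hφ.stabilizer v := by
  have := isMulTorsionFree_of_mulEquiv e
  obtain ⟨φ, hφ, hφL⟩ := hρ.exists_isCrossedHom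
  refine ⟨_, hφ.nsmul (Nat.card (Γ ⧸ L)), fun v => ?_, fun K _ => hφ.exists_le_stabilizer K <|
    Subgroup.card_dvd_of_injective _ (injective_mk'_subtype_of_disjoint (disjoint_of_finite K))⟩
  refine finite_of_disjoint (L := L) (Subgroup.disjoint_def.2 fun {l} hl hlL => ?_)
  obtain ⟨x, rfl⟩ := exists_latticeHom_eq (e := e) hlL
  have hx : v + Nat.card (Γ ⧸ L) • Nat.card (Γ ⧸ L) • x = v := by
    simpa [(QuotientGroup.eq_one_iff _).2 hlL, hφL] using (hφ.nsmul _).mem_stabilizer.1 hl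
  have hx0 : x = 0 := by simpa [Nat.card_pos.ne'] using hx
  rw [hx0, ofAdd_zero, map_one]

theorem existsUnique_isMaxFin (hρ : IsConjRep e ρ)
    (hfree : ∀ g : Γ ⧸ L, g ≠ 1 → ∀ x : V, x ≠ 0 → ρ g x ≠ x) {γ : Γ} (hγ : γ ∉ L) :
    ∃! M : Subgroup Γ, IsMaxFin Γ M ∧ γ ∈ M := by
  obtain ⟨φ, hφ, finite_stabilizer, exists_le_stabilizer⟩ := hρ.exists_isCrossedHom_stabilizer
  have fixedPoint_unique {v w : V} (hv : γ ∈ hφ.stabilizer v) (hw : γ ∈ hφ.stabilizer w) :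
      v = w := by
    refine injective_id_sub (hfree γ fun h => hγ ((QuotientGroup.eq_one_iff γ).1 h)) ?_
    exact (sub_eq_of_eq_add' hv.symm).trans (sub_eq_of_eq_add' hw.symm).symm
  obtain ⟨v, hv⟩ :=
    exists_le_stabilizer (Subgroup.zpowers γ) (hρ.isOfFinOrder_of_notMem hfree hγ).finite_zpowers
  have hγv : γ ∈ hφ.stabilizer v := hv (Subgroup.mem_zpowers γ)
  have le_stabilizer {K : Subgroup Γ} (hK : (K : Set Γ).Finite) (hγK : γ ∈ K) :
      K ≤ hφ.stabilizer v := by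
    obtain ⟨w, hw⟩ := exists_le_stabilizer K hK
    rwa [fixedPoint_unique hγv (hw hγK)]
  refine ⟨hφ.stabilizer v, ⟨⟨finite_stabilizer v, fun K hK hle =>
    hle.antisymm (le_stabilizer hK (hle hγv))⟩, hγv⟩, ?_⟩
  rintro M ⟨hM, hγM⟩
  exact hM.2 _ (finite_stabilizer v) (le_stabilizer hM.1 hγM)

theorem maxFinIsolated (hρ : IsConjRep e ρ)
    (hfree : ∀ g : Γ ⧸ L, g ≠ 1 → ∀ x : V, x ≠ 0 → ρ g x ≠ x) : MaxFinIsolated L :=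
  have := isMulTorsionFree_of_mulEquiv e
  { existsUnique := fun _ hγ => hρ.existsUnique_isMaxFin hfree hγ
    normalizer_le := fun _ => normalizer_le_of_isMaxFin fun _ hγ _ hl =>
      hρ.eq_one_of_commute hfree hγ hl }

end IsConjRep

end AffineAction

section CountingLifts

namespace MaxFinIsolated

theorem eq_of_mem (hL : MaxFinIsolated L) {γ : Γ} (hγ : γ ∉ L) {M N : Subgroup Γ}
    (hM : IsMaxFin Γ M) (hγM : γ ∈ M) (hN : IsMaxFin Γ N) (hγN : γ ∈ N) : M = N :=
  (hL.existsUnique γ hγ).unique ⟨hM, hγM⟩ ⟨hN, hγN⟩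

/-- The unique maximal finite subgroup containing an element outside `L`. -/
noncomputable def maxFinOf (hL : MaxFinIsolated L) {γ : Γ} (hγ : γ ∉ L) :
    {H : Subgroup Γ // IsMaxFin Γ H ∧ H ≠ ⊥} :=
  ⟨(hL.existsUnique γ hγ).choose, (hL.existsUnique γ hγ).choose_spec.1.1, fun hbot => by
    have hγbot := hbot ▸ (hL.existsUnique γ hγ).choose_spec.1.2
    exact hγ (Subgroup.mem_bot.1 hγbot ▸ L.one_mem)⟩

theorem mem_maxFinOf (hL : MaxFinIsolated L) {γ : Γ} (hγ : γ ∉ L) : γ ∈ (hL.maxFinOf hγ).1 :=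
  (hL.existsUnique γ hγ).choose_spec.1.2

variable [L.Normal] {g : Γ ⧸ L}

/-- The class of the maximal finite subgroup containing a given lift of `g ≠ 1`. -/
noncomputable def classOfLift (hL : MaxFinIsolated L) (hg : g ≠ 1) :
    LiftClasses L g → MaxFinClasses Γ :=
  Quotient.lift (fun γ => Quot.mk _ (hL.maxFinOf (notMem_of_mk_eq hg γ.2))) <| by
    rintro γ δ ⟨l, -, h⟩
    refine mk_eq_mk_iff_subConj.2 (subConj_iff.2 ⟨l, ?_⟩)
    refine hL.eq_of_mem (notMem_of_mk_eq hg δ.2) (hL.maxFinOf _).2.1 (hL.mem_maxFinOf _)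
      ((hL.maxFinOf _).2.1.conj_smul l) ?_
    rw [← h]
    exact Subgroup.smul_mem_pointwise_smul _ (MulAut.conj l) _ (hL.mem_maxFinOf _)

theorem classOfLift_mk_eq_iff (hL : MaxFinIsolated L) (hg : g ≠ 1)
    {γ : {γ : Γ // (γ : Γ ⧸ L) = g}} {M : {H : Subgroup Γ // IsMaxFin Γ H ∧ H ≠ ⊥}} :
    hL.classOfLift hg (Quotient.mk _ γ) = Quot.mk _ M ↔ ∃ δ : Γ, γ.1 ∈ MulAut.conj δ • M.1 := by
  have hγ := notMem_of_mk_eq hg γ.2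
  refine eq_comm.trans (mk_eq_mk_iff_subConj.trans (subConj_iff.trans (exists_congr fun δ => ?_)))
  constructor
  · intro h
    exact h ▸ hL.mem_maxFinOf hγ
  · exact hL.eq_of_mem hγ (hL.maxFinOf hγ).2.1 (hL.mem_maxFinOf hγ) (M.2.1.conj_smul δ)

theorem finite_maxFinClasses (hL : MaxFinIsolated L) [IsMulTorsionFree L] [Finite (Γ ⧸ L)]
    (hfin : ∀ g : Γ ⧸ L, g ≠ 1 → Finite (LiftClasses L g)) : Finite (MaxFinClasses Γ) := by
  have (g : {g : Γ ⧸ L // g ≠ 1}) : Finite (LiftClasses L g.1) := hfin g g.2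
  refine Finite.of_surjective
    (fun q : Σ g : {g : Γ ⧸ L // g ≠ 1}, LiftClasses L g.1 => hL.classOfLift q.1.2 q.2) ?_
  rintro ⟨M⟩
  have : Finite M.1 := M.2.1.1
  obtain ⟨k, hk, hk1⟩ := M.1.bot_or_exists_ne_one.resolve_left M.2.2
  have hkL : (k : Γ ⧸ L) ≠ 1 := fun h =>
    hk1 (Subgroup.disjoint_def.1 (disjoint_of_finite M.1) hk ((QuotientGroup.eq_one_iff k).1 h))
  exact ⟨⟨⟨k, hkL⟩, Quotient.mk _ ⟨k, rfl⟩⟩,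
    (hL.classOfLift_mk_eq_iff hkL).2 ⟨1, by simpa using hk⟩⟩

theorem exists_conj_eq_iff (hL : MaxFinIsolated L) [IsMulTorsionFree L]
    {M : Subgroup Γ} (hM : IsMaxFin Γ M) {δ δ' k k' : Γ} (hk : k ∈ M) (hk' : k' ∈ M)
    (h' : δ' * k' * δ'⁻¹ ∉ L)
    (h : ((δ * k * δ⁻¹ : Γ) : Γ ⧸ L) = (δ' * k' * δ'⁻¹ : Γ)) :
    (∃ l ∈ L, l * (δ * k * δ⁻¹) * l⁻¹ = δ' * k' * δ'⁻¹) ↔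
      (δ : Γ ⧸ L)⁻¹ * δ' ∈ M.map (QuotientGroup.mk' L) := by
  have : Finite M := hM.1
  constructor
  · rintro ⟨l, hl, hconj⟩
    have hmem : δ' * k' * δ'⁻¹ ∈ MulAut.conj (l * δ) • M := by
      rw [← hconj]
      convert Subgroup.smul_mem_pointwise_smul _ (MulAut.conj (l * δ)) _ hk using 1
      simp [mul_assoc]
    have hstab : MulAut.conj (l * δ) • M = MulAut.conj δ' • M :=
      hL.eq_of_mem h' (hM.conj_smul _) hmem (hM.conj_smul _)
        (Subgroup.smul_mem_pointwise_smul _ (MulAut.conj δ') _ hk')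
    have hmemM : δ'⁻¹ * (l * δ) ∈ M := by
      refine hL.normalizer_le M hM ?_ (mem_normalizer_of_conj_smul_eq ?_)
      · rintro rfl
        rw [Subgroup.mem_bot.1 hk', mul_one, mul_inv_cancel] at h'
        exact h' L.one_mem
      · rw [map_mul, mul_smul, hstab, map_inv, inv_smul_smul]
    refine ⟨_, inv_mem hmemM, ?_⟩
    simp [(QuotientGroup.eq_one_iff l).2 hl]
  · rintro ⟨c, hc, hcδ : (c : Γ ⧸ L) = (δ : Γ ⧸ L)⁻¹ * δ'⟩
    have hl : δ' * c⁻¹ * δ⁻¹ ∈ L := by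
      rw [← QuotientGroup.eq_one_iff]
      simp [hcδ]
    have hcongr : ((c⁻¹ * k * c : Γ) : Γ ⧸ L) = k' := by
      calc ((c⁻¹ * k * c : Γ) : Γ ⧸ L) = (δ' : Γ ⧸ L)⁻¹ * (δ * k * δ⁻¹ : Γ) * δ' := by
            simp [hcδ, mul_assoc]
        _ = k' := by
            rw [h]
            simp [mul_assoc]
    have hconj : c⁻¹ * k * c = k' := congrArg Subtype.val <|
      injective_mk'_subtype_of_disjoint (disjoint_of_finite M)
        (a₁ := ⟨_, mul_mem (mul_mem (inv_mem hc) hk) hc⟩) (a₂ := ⟨k', hk'⟩) hcongr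
    exact ⟨_, hl, by rw [← hconj]; group⟩

theorem exists_toLiftClass_eq_iff (hL : MaxFinIsolated L) (hg : g ≠ 1)
    {M : {H : Subgroup Γ // IsMaxFin Γ H ∧ H ≠ ⊥}} {q : LiftClasses L g} :
    (∃ p : ConjLifts M.1 g, p.toLiftClass = q) ↔ hL.classOfLift hg q = Quot.mk _ M := by
  constructor
  · rintro ⟨p, rfl⟩
    exact (hL.classOfLift_mk_eq_iff hg).2
      ⟨p.1.1, Subgroup.smul_mem_pointwise_smul _ (MulAut.conj _) _ p.1.2.2⟩
  · obtain ⟨γ, rfl⟩ := Quotient.mk_surjective q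
    intro h
    obtain ⟨δ, k, hk, hkγ : δ * k * δ⁻¹ = γ⟩ := (hL.classOfLift_mk_eq_iff hg).1 h
    exact ⟨⟨(δ, ⟨k, hk⟩), hkγ ▸ γ.2⟩, congrArg (Quotient.mk _) (Subtype.ext hkγ)⟩

theorem toLiftClass_eq_iff (hL : MaxFinIsolated L) [IsMulTorsionFree L] (hg : g ≠ 1)
    {M : Subgroup Γ} (hM : IsMaxFin Γ M) {p p' : ConjLifts M g} :
    p.toLiftClass = p'.toLiftClass ↔ p.toFixedPoint = p'.toFixedPoint := by
  refine liftClasses_mk_eq_mk.trans (Iff.trans ?_ (Subtype.ext_iff.trans QuotientGroup.eq).symm)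
  exact hL.exists_conj_eq_iff hM p.1.2.2 p'.1.2.2 (notMem_of_mk_eq hg p'.2) (p.2.trans p'.2.symm)

theorem card_classOfLift_fiber (hL : MaxFinIsolated L) [IsMulTorsionFree L] (hg : g ≠ 1)
    (M : {H : Subgroup Γ // IsMaxFin Γ H ∧ H ≠ ⊥}) :
    Nat.card {q : LiftClasses L g // hL.classOfLift hg q = Quot.mk _ M} =
      Nat.card (MulAction.fixedBy ((Γ ⧸ L) ⧸ M.1.map (QuotientGroup.mk' L)) g) := by
  let toFiber (p : ConjLifts M.1 g) : {q : LiftClasses L g // hL.classOfLift hg q = Quot.mk _ M} :=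
    ⟨p.toLiftClass, (hL.exists_toLiftClass_eq_iff hg).1 ⟨p, rfl⟩⟩
  have toFiber_surjective : Function.Surjective toFiber := fun ⟨q, hq⟩ => by
    obtain ⟨p, rfl⟩ := (hL.exists_toLiftClass_eq_iff hg).2 hq
    exact ⟨p, rfl⟩
  exact Nat.card_congr <| equivOfKerEq toFiber_surjective ConjLifts.toFixedPoint_surjective
    fun p p' => Subtype.ext_iff.trans (hL.toLiftClass_eq_iff hg M.2.1)

theorem finsum_eq_card_liftClasses (hL : MaxFinIsolated L) [IsMulTorsionFree L]
    [Finite (MaxFinClasses Γ)] (hg : g ≠ 1) [Finite (LiftClasses L g)]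
    {F : MaxFinClasses Γ → ℚ} (hF : ∀ M : {H : Subgroup Γ // IsMaxFin Γ H ∧ H ≠ ⊥},
      F (Quot.mk _ M) =
        Nat.card (MulAction.fixedBy ((Γ ⧸ L) ⧸ M.1.map (QuotientGroup.mk' L)) g)) :
    ∑ᶠ x, F x = Nat.card (LiftClasses L g) := by
  have := Fintype.ofFinite (MaxFinClasses Γ)
  have hfiber (x : MaxFinClasses Γ) :
      F x = Nat.card {q : LiftClasses L g // hL.classOfLift hg q = x} := by
    obtain ⟨M, rfl⟩ := Quot.mk_surjective x
    rw [hF, hL.card_classOfLift_fiber hg]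
  rw [finsum_eq_sum_of_fintype, ← Nat.card_congr (Equiv.sigmaFiberEquiv (hL.classOfLift hg)),
    Nat.card_sigma, Nat.cast_sum, Finset.sum_congr rfl fun x _ => hfiber x]

end MaxFinIsolated

end CountingLifts

end MaximalFinite

theorem statement19_general {Γ V : Type*} [Group Γ] [AddCommGroup V] [Module.Free ℤ V]
    [Module.Finite ℤ V] (L : Subgroup Γ) [L.Normal] [Finite (Γ ⧸ L)]
    (e : L ≃* Multiplicative V) (ρ : Representation ℤ (Γ ⧸ L) V) (hρ : IsConjRep e ρ)
    (hfree : ∀ g : Γ ⧸ L, g ≠ 1 → ∀ x : V, x ≠ 0 → ρ g x ≠ x) :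
    Finite (MaxFinClasses Γ) ∧
    (∀ H K : Subgroup Γ, SubConj Γ H K →
      SubConj (Γ ⧸ L) (H.map (QuotientGroup.mk' L)) (K.map (QuotientGroup.mk' L))) ∧
    ∀ g : Γ ⧸ L, g ≠ 1 → ∀ F : MaxFinClasses Γ → ℚ,
      (∀ H : {H : Subgroup Γ // IsMaxFin Γ H ∧ H ≠ ⊥}, F (Quot.mk _ H) =
        Nat.card (MulAction.fixedBy ((Γ ⧸ L) ⧸ H.1.map (QuotientGroup.mk' L)) g)) →
      LinearMap.det (LinearMap.id - (ρ g).baseChange ℚ) = ∑ᶠ x : MaxFinClasses Γ, F x := by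
  have : IsAddTorsionFree V := IsAddTorsionFree.of_isTorsionFree ℤ V
  have := isMulTorsionFree_of_mulEquiv e
  have hL := hρ.maxFinIsolated hfree
  have equivQuotient (g : Γ ⧸ L) := (hρ.nonempty_quotient_range_equiv_liftClasses g).some
  have injective {g : Γ ⧸ L} (hg : g ≠ 1) := injective_id_sub (hfree g hg)
  have finite_liftClasses (g : Γ ⧸ L) (hg : g ≠ 1) : Finite (LiftClasses L g) :=
    have := finite_quotient_range (injective hg)
    .of_equiv _ (equivQuotient g)
  have hfin := hL.finite_maxFinClasses finite_liftClasses
  refine ⟨hfin, fun H K => SubConj.map _, fun g hg F hF => ?_⟩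
  have := finite_liftClasses g hg
  rw [hL.finsum_eq_card_liftClasses hg hF, ← Nat.card_congr (equivQuotient g)]
  exact det_id_sub_baseChange_eq_card (ρ.isOfFinOrder (isOfFinOrder_of_finite g)) (injective hg)

/-- In the setting of the paper (`L ≅ ℤⁿ` normal in `Γ`, `G = Γ/L` cyclic of order `m`, the
conjugation action of `G` on `L` — given by the representation `ρ` via the identification `e` —
free outside the origin), the set `ℳ` of conjugacy classes of maximal finite subgroups is finite,
`π(M)` only depends on the conjugacy class of `M`, and for every `g ∈ G`, `g ≠ 1`, the
determinant of `id − ρ(g)` on `L ⊗ ℚ` equals `Σ_{(M) ∈ ℳ, g ∈ π(M)} [G : π(M)]`. -/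
theorem statement19 (n m : ℕ) (hn : 1 ≤ n) (hm : 1 ≤ m)
    (Γ : Type*) [Group Γ] (L : Subgroup Γ) [hN : L.Normal]
    (e : L ≃* Multiplicative (Fin n → ℤ))
    (hcyc : IsCyclic (Γ ⧸ L)) (hcard : Nat.card (Γ ⧸ L) = m)
    (ρ : Representation ℤ (Γ ⧸ L) (Fin n → ℤ))
    (hρ : ∀ (γ : Γ) (x : L),
      e ⟨γ * (x : Γ) * γ⁻¹, hN.conj_mem (x : Γ) x.2 γ⟩ =
        Multiplicative.ofAdd (ρ ((γ : Γ ⧸ L)) (Multiplicative.toAdd (e x))))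
    (hfree : ∀ g : Γ ⧸ L, g ≠ 1 → ∀ x : Fin n → ℤ, x ≠ 0 → ρ g x ≠ x) :
    Finite (MaxFinClasses Γ) ∧
    (∀ H K : {H : Subgroup Γ // IsMaxFin Γ H ∧ H ≠ ⊥}, SubConj Γ H.1 K.1 →
      Subgroup.map (QuotientGroup.mk' L) H.1 = Subgroup.map (QuotientGroup.mk' L) K.1) ∧
    ∀ g : Γ ⧸ L, g ≠ 1 →
      ∀ F : MaxFinClasses Γ → ℚ,
        (∀ H : {H : Subgroup Γ // IsMaxFin Γ H ∧ H ≠ ⊥},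
          F (Quot.mk _ H) =
            if g ∈ Subgroup.map (QuotientGroup.mk' L) H.1 then
              ((Subgroup.map (QuotientGroup.mk' L) H.1).index : ℚ)
            else 0) →
        LinearMap.det
            (LinearMap.id - LinearMap.baseChange ℚ (ρ g) :
              ℚ ⊗[ℤ] (Fin n → ℤ) →ₗ[ℚ] ℚ ⊗[ℤ] (Fin n → ℤ)) =
          ∑ᶠ x : MaxFinClasses Γ, F x := by
  have : Finite (Γ ⧸ L) := Nat.finite_of_card_ne_zero (by lia)
  obtain ⟨hfin, hconj, hdet⟩ := statement19_general L e ρ hρ hfree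
  refine ⟨hfin, fun H K h => (hconj H K h).eq, fun g hg F hF => hdet g hg F fun H => ?_⟩
  rw [hF, card_fixedBy_quotient, Nat.cast_ite, Nat.cast_zero]
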